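/- Let t₁ᴸ, t₁ᴿ, t₂ᴸ, t₂ᴿ satisfy 0 < t₁ᴸ < t₂ᴸ < θ_c < t₂ᴿ < t₁ᴿ < 2π with f(t₁ᴸ) = f(t₁ᴿ) and f(t₂ᴸ) = f(t₂ᴿ), where θ_c is the unique critical point of f in (0, π). Then t₂ᴸ + t₂ᴿ < t₁ᴸ + t₁ᴿ. -/

import Mathlib

open Real Set

noncomputable def f (x : ℝ) : ℝ := Real.sin x * (1 - 1 / (8 * Real.sin (x/2)^3))

/-- The three-point inequality for strictly convex functions, cleared of denominators. -/
theorem StrictConvexOn.three_point_lt {s : Set ℝ} {g : ℝ → ℝ} (hg : StrictConvexOn ℝ s g)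
    {x y z : ℝ} (hx : x ∈ s) (hz : z ∈ s) (hxy : x < y) (hyz : y < z) :
    (z - x) * g y < (z - y) * g x + (y - x) * g z := by
  have h := hg.slope_strict_mono_adjacent hx hz hxy hyz
  rw [div_lt_div_iff₀ (sub_pos.2 hxy) (sub_pos.2 hyz)] at h
  linarith

theorem strictMonoOn_Icc_of_hasDerivAt_pos {F F' : ℝ → ℝ} {a b : ℝ}
    (hF : ∀ x ∈ Icc a b, HasDerivAt F (F' x) x) (hpos : ∀ x ∈ Ioo a b, 0 < F' x) :
    StrictMonoOn F (Icc a b) := by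
  refine strictMonoOn_of_deriv_pos (convex_Icc a b)
    (fun x hx => (hF x hx).continuousAt.continuousWithinAt) fun x hx => ?_
  rw [interior_Icc] at hx
  rw [(hF x (Ioo_subset_Icc_self hx)).deriv]
  exact hpos x hx

/-- If the derivative of `F` is strictly convex, then chords of `F` below a local maximum have
midpoints moving to the right as the level decreases. -/
theorem add_lt_add_of_strictConvexOn_derivative {F g : ℝ → ℝ} {l r : ℝ}
    (hF : ∀ x ∈ Ioo l r, HasDerivAt F (g x) x) (hg : StrictConvexOn ℝ (Ioo l r) g)
    {a b c d p q : ℝ} (hla : l < a) (hab : a < b) (hbp : b < p) (hpq : p < q) (hqr : q < r)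
    (hpc : p < c) (hcd : c < d) (hdr : d < r) (hp : g p = 0) (hq : g q = 0)
    (had : F a = F d) (hbc : F b = F c) : b + c < a + d := by
  have mem : ∀ {x}, l < x → x < r → x ∈ Ioo l r := fun h h' => ⟨h, h'⟩
  have left_pos : ∀ x, l < x → x < p → 0 < g x := fun x hlx hxp => by
    have h := hg.three_point_lt (mem hlx (by linarith)) (mem (by linarith) hqr) hxp hpq
    rw [hp, hq] at h
    by_contra! h0
    nlinarith
  have hab' : F a < F b :=
    strictMonoOn_Icc_of_hasDerivAt_pos (fun x hx => hF x ⟨by linarith [hx.1], by linarith [hx.2]⟩)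
      (fun x hx => left_pos x (by linarith [hx.1]) (by linarith [hx.2]))
      (left_mem_Icc.2 hab.le) (right_mem_Icc.2 hab.le) hab
  have hgb : 0 < g b := left_pos b (by linarith) hbp
  have hgc : g c ≤ 0 := by
    by_contra! hgc
    have hcd' : F c < F d := by
      refine strictMonoOn_Icc_of_hasDerivAt_pos
        (fun x hx => hF x ⟨by linarith [hx.1], by linarith [hx.2]⟩) (fun x hx => ?_)
        (left_mem_Icc.2 hcd.le) (right_mem_Icc.2 hcd.le) hcd
      have h := hg.three_point_lt (mem (by linarith) (by linarith))
        (mem (x := x) (by linarith [hx.1]) (by linarith [hx.2])) hpc hx.1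
      rw [hp] at h
      by_contra! h0
      nlinarith [hx.1]
    linarith
  -- `H` is a multiple of `F` minus an antiderivative of the chord of `g` over `[b, c]`.
  set H : ℝ → ℝ := fun x => (c - b) * F x + (c - x) ^ 2 / 2 * g b - (x - b) ^ 2 / 2 * g c with hH
  have hHd : ∀ x ∈ Ioo l r,
      HasDerivAt H ((c - b) * g x - (c - x) * g b - (x - b) * g c) x := fun x hx => by
    have h1 := ((((hasDerivAt_id x).const_sub c).pow 2).div_const 2).mul_const (g b)
    have h2 := ((((hasDerivAt_id x).sub_const b).pow 2).div_const 2).mul_const (g c)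
    refine ((((hF x hx).const_mul (c - b)).add h1).sub h2).congr_deriv ?_
    simp
    ring
  have hHab : H a < H b := by
    refine strictMonoOn_Icc_of_hasDerivAt_pos
      (fun x hx => hHd x ⟨by linarith [hx.1], by linarith [hx.2]⟩) (fun x hx => ?_)
      (left_mem_Icc.2 hab.le) (right_mem_Icc.2 hab.le) hab
    have h := hg.three_point_lt (mem (x := x) (by linarith [hx.1]) (by linarith [hx.2]))
      (mem (by linarith) (by linarith)) hx.2 (hbp.trans hpc)
    linarith
  have hHcd : H c < H d := by
    refine strictMonoOn_Icc_of_hasDerivAt_pos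
      (fun x hx => hHd x ⟨by linarith [hx.1], by linarith [hx.2]⟩) (fun x hx => ?_)
      (left_mem_Icc.2 hcd.le) (right_mem_Icc.2 hcd.le) hcd
    have h := hg.three_point_lt (mem (by linarith) (by linarith))
      (mem (x := x) (by linarith [hx.1]) (by linarith [hx.2])) (hbp.trans hpc) hx.1
    linarith
  have hHbc : -H b < -H c := by
    refine strictMonoOn_Icc_of_hasDerivAt_pos (F := fun x => -H x)
      (fun x hx => (hHd x ⟨by linarith [hx.1], by linarith [hx.2]⟩).neg) (fun x hx => ?_)
      (left_mem_Icc.2 (hbp.trans hpc).le) (right_mem_Icc.2 (hbp.trans hpc).le) (hbp.trans hpc)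
    have h := hg.three_point_lt (mem (by linarith) (by linarith))
      (mem (by linarith) (by linarith)) hx.1 hx.2
    linarith
  simp only [hH, had, hbc] at hHab hHcd hHbc
  by_contra! hle
  have hw : 0 < c - b := by linarith
  have hsum : 0 < g b + g c := by
    by_contra! h0
    nlinarith [mul_nonneg (sq_nonneg (c - b)) (neg_nonneg.2 h0)]
  have hA : 0 ≤ (b - a) - (d - c) := by linarith
  have e1 : 0 ≤ (c - b) * ((b - a) * g b + (d - c) * g c) := by
    refine mul_nonneg hw.le ?_
    nlinarith [mul_nonneg hA hgb.le, mul_nonneg (sub_nonneg.2 hcd.le) hsum.le]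
  have e2 : 0 ≤ ((b - a) - (d - c)) * ((b - a) + (d - c)) * (g b - g c) :=
    mul_nonneg (mul_nonneg hA (by linarith)) (by linarith)
  linarith

theorem sin_half_pos {x : ℝ} (hx : x ∈ Ioo 0 (2 * π)) : 0 < sin (x / 2) :=
  sin_pos_of_pos_of_lt_pi (by linarith [hx.1]) (by linarith [hx.2])

theorem hasDerivAt_sin_half (x : ℝ) : HasDerivAt (fun x => sin (x / 2)) (cos (x / 2) / 2) x :=
  ((hasDerivAt_id x).div_const 2).sin.congr_deriv (by simp; ring)

theorem hasDerivAt_cos_half (x : ℝ) : HasDerivAt (fun x => cos (x / 2)) (-sin (x / 2) / 2) x :=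
  ((hasDerivAt_id x).div_const 2).cos.congr_deriv (by simp; ring)

theorem sin_eq_half (x : ℝ) : sin x = 2 * sin (x / 2) * cos (x / 2) := by
  rw [← sin_two_mul]; ring_nf

theorem cos_eq_half (x : ℝ) : cos x = 1 - 2 * sin (x / 2) ^ 2 := by
  have h := cos_two_mul' (x / 2)
  rw [mul_div_cancel₀ x two_ne_zero] at h
  linarith [sin_sq_add_cos_sq (x / 2)]

/-- The derivative of `f` on `(0, 2π)`. -/
noncomputable def fDeriv (x : ℝ) : ℝ := cos x - 1 / (8 * sin (x / 2)) + 1 / (4 * sin (x / 2) ^ 3)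

/-- The second derivative of `f` on `(0, 2π)`. -/
noncomputable def fDerivTwo (x : ℝ) : ℝ :=
  -sin x + cos (x / 2) / (16 * sin (x / 2) ^ 2) - 3 * cos (x / 2) / (8 * sin (x / 2) ^ 4)

/-- The third derivative of `f` on `(0, 2π)`. -/
noncomputable def fDerivThree (x : ℝ) : ℝ :=
  -cos x + (24 - 20 * sin (x / 2) ^ 2 + sin (x / 2) ^ 4) / (32 * sin (x / 2) ^ 5)

theorem hasDerivAt_f {x : ℝ} (hx : x ∈ Ioo 0 (2 * π)) : HasDerivAt f (fDeriv x) x := by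
  have hs := sin_half_pos hx
  have h := (hasDerivAt_sin x).mul
    ((((hasDerivAt_const x (1 : ℝ)).div (((hasDerivAt_sin_half x).pow 3).const_mul 8)
      (by simp; positivity))).const_sub 1)
  refine h.congr_deriv ?_
  have hc : cos (x / 2) ^ 2 = 1 - sin (x / 2) ^ 2 := by linarith [sin_sq_add_cos_sq (x / 2)]
  simp only [fDeriv, sin_eq_half x, cos_eq_half x, Pi.pow_apply, Pi.div_apply]
  generalize sin (x / 2) = s at *
  generalize cos (x / 2) = c at *
  field_simp
  ring_nf
  simp only [hc]
  ring

theorem hasDerivAt_fDeriv {x : ℝ} (hx : x ∈ Ioo 0 (2 * π)) :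
    HasDerivAt fDeriv (fDerivTwo x) x := by
  have hs := sin_half_pos hx
  have h := ((hasDerivAt_cos x).sub
    ((hasDerivAt_const x (1 : ℝ)).div ((hasDerivAt_sin_half x).const_mul 8)
      (by positivity))).add
    ((hasDerivAt_const x (1 : ℝ)).div (((hasDerivAt_sin_half x).pow 3).const_mul 4)
      (by simp; positivity))
  refine h.congr_deriv ?_
  simp only [fDerivTwo, Pi.pow_apply]
  field_simp
  ring

theorem hasDerivAt_fDerivTwo {x : ℝ} (hx : x ∈ Ioo 0 (2 * π)) :
    HasDerivAt fDerivTwo (fDerivThree x) x := by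
  have hs := sin_half_pos hx
  have h := ((hasDerivAt_sin x).neg.add
    ((hasDerivAt_cos_half x).div (((hasDerivAt_sin_half x).pow 2).const_mul 16)
      (by simp; positivity))).sub
    (((hasDerivAt_cos_half x).const_mul 3).div (((hasDerivAt_sin_half x).pow 4).const_mul 8)
      (by simp; positivity))
  refine h.congr_deriv ?_
  have hc : cos (x / 2) ^ 2 = 1 - sin (x / 2) ^ 2 := by linarith [sin_sq_add_cos_sq (x / 2)]
  simp only [fDerivThree, Pi.pow_apply]
  generalize sin (x / 2) = s at *
  generalize cos (x / 2) = c at *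
  field_simp
  ring_nf
  simp only [hc]
  ring

theorem fDerivThree_pos {x : ℝ} (hx : x ∈ Ioo 0 (2 * π)) : 0 < fDerivThree x := by
  have hs := sin_half_pos hx
  have hs1 := sin_le_one (x / 2)
  rw [fDerivThree, cos_eq_half]
  set s := sin (x / 2)
  have hs2 : s ^ 2 ≤ 1 := pow_le_one₀ hs.le hs1
  have hs4 : 0 < s ^ 4 := by positivity
  rcases le_or_gt 1 (2 * s ^ 2) with h | h
  · have : 0 < (24 - 20 * s ^ 2 + s ^ 4) / (32 * s ^ 5) := div_pos (by linarith) (by positivity)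
    linarith
  · have h5 : s ^ 5 ≤ 1 / 4 := by
      calc s ^ 5 = (s ^ 2) ^ 2 * s := by ring
        _ ≤ (1 / 2) ^ 2 * 1 := by gcongr; linarith
        _ = 1 / 4 := by norm_num
    have : 1 < (24 - 20 * s ^ 2 + s ^ 4) / (32 * s ^ 5) := by
      rw [one_lt_div (by positivity)]
      linarith
    nlinarith

theorem strictConvexOn_fDeriv : StrictConvexOn ℝ (Ioo 0 (2 * π)) fDeriv := by
  have hmono : StrictMonoOn fDerivTwo (Ioo 0 (2 * π)) := by
    refine strictMonoOn_of_deriv_pos (convex_Ioo _ _)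
      (fun x hx => (hasDerivAt_fDerivTwo hx).continuousAt.continuousWithinAt) fun x hx => ?_
    rw [interior_Ioo] at hx
    rw [(hasDerivAt_fDerivTwo hx).deriv]
    exact fDerivThree_pos hx
  refine StrictMonoOn.strictConvexOn_of_deriv (convex_Ioo _ _)
    (fun x hx => (hasDerivAt_fDeriv hx).continuousAt.continuousWithinAt) ?_
  rw [interior_Ioo]
  exact hmono.congr fun x hx => (hasDerivAt_fDeriv hx).deriv.symm

theorem fDeriv_two_pi_sub (x : ℝ) : fDeriv (2 * π - x) = fDeriv x := by
  have h : (2 * π - x) / 2 = π - x / 2 := by ring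
  rw [fDeriv, fDeriv, h, sin_pi_sub, cos_two_pi_sub]

theorem stmt6 (θc t1L t1R t2L t2R : ℝ)
    (hθc : θc ∈ Ioo (0:ℝ) π) (hcrit : deriv f θc = 0)
    (huniq : ∀ x ∈ Ioo (0:ℝ) π, deriv f x = 0 → x = θc)
    (h1 : 0 < t1L) (h2 : t1L < t2L) (h3 : t2L < θc) (h4 : θc < t2R)
    (h5 : t2R < t1R) (h6 : t1R < 2*π)
    (hf1 : f t1L = f t1R) (hf2 : f t2L = f t2R) :
    t2L + t2R < t1L + t1R := by
  have hθ : θc ∈ Ioo 0 (2 * π) := ⟨hθc.1, by linarith [hθc.1, hθc.2]⟩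
  have h0 : fDeriv θc = 0 := (hasDerivAt_f hθ).deriv ▸ hcrit
  exact add_lt_add_of_strictConvexOn_derivative (fun x hx => hasDerivAt_f hx) strictConvexOn_fDeriv
    h1 h2 h3 (q := 2 * π - θc) (by linarith [hθc.2]) (by linarith [hθc.1]) h4 h5 h6 h0
    ((fDeriv_two_pi_sub θc).trans h0) hf1 hf2
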